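/- arXiv:1901.06872 — 3 statements merged into one kernel-verified Lean document; each statement's English description precedes it below -/
import Mathlib

section
/- For every integer m ≥ 2 there exists a real number α_m with 2/m < α_m < 12/m and 𝐩_m(α_m) = 0 such that for every real α ≥ α_m there exists γ with 0 < γ < 1 − 1/(m+α) and P_{m,α}(γ) ≥ 0. -/
/-- The quartic polynomial `P_{m,α}(γ)` from the analysis of the lower solution. -/
noncomputable def Pquartic (m : ℕ) (α : ℝ) (γ : ℝ) : ℝ :=
  ((m : ℝ) + α) ^ 3 * γ ^ 4
    + (-(((m : ℝ) + α) ^ 2 * ((m : ℝ) + α + 1))) * γ ^ 3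
    + (((m : ℝ) + α) * (2 * (m : ℝ) + 6 * α - 4 * (m : ℝ) * α - 1)) * γ ^ 2
    + (4 * (m : ℝ) ^ 2 * α + 4 * α ^ 2 * (m : ℝ) - 4 * α ^ 2 - 5 * α - (m : ℝ) + 1) * γ
    + (-(8 * ((m : ℝ) - 1) * α))

/-- The degree-8 polynomial `𝐩_m(α)` whose unique positive root is `α_m`. -/
noncomputable def pm (m : ℕ) (α : ℝ) : ℝ :=
  16 * ((m : ℝ) - 1) ^ 2 * α ^ 8
    - 4 * ((m : ℝ) - 1) * (8 * (m : ℝ) ^ 2 + 3) * α ^ 7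
    - (16 * (m : ℝ) ^ 4 - 256 * (m : ℝ) ^ 3 + 584 * (m : ℝ) ^ 2 - 496 * (m : ℝ) + 153) * α ^ 6
    + 2 * (32 * (m : ℝ) ^ 5 - 224 * (m : ℝ) ^ 4 + 1238 * (m : ℝ) ^ 3 - 2738 * (m : ℝ) ^ 2
        + 2545 * (m : ℝ) - 852) * α ^ 5
    - ((m : ℝ) - 1) * (16 * (m : ℝ) ^ 5 + 48 * (m : ℝ) ^ 4 - 1712 * (m : ℝ) ^ 3
        + 6672 * (m : ℝ) ^ 2 - 4321 * (m : ℝ) - 641) * α ^ 4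
    - 2 * (16 * (m : ℝ) ^ 7 - 208 * (m : ℝ) ^ 6 + 250 * (m : ℝ) ^ 5 + 2302 * (m : ℝ) ^ 4
        - 3214 * (m : ℝ) ^ 3 - 588 * (m : ℝ) ^ 2 + 1566 * (m : ℝ) - 123) * α ^ 3
    + (16 * (m : ℝ) ^ 8 - 192 * (m : ℝ) ^ 7 + 984 * (m : ℝ) ^ 6 - 2864 * (m : ℝ) ^ 5
        + 1001 * (m : ℝ) ^ 4 + 4184 * (m : ℝ) ^ 3 - 3870 * (m : ℝ) ^ 2 + 794 * (m : ℝ) - 52) * α ^ 2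
    - 2 * ((m : ℝ) - 1) * (22 * (m : ℝ) ^ 6 - 148 * (m : ℝ) ^ 5 + 363 * (m : ℝ) ^ 4
        - 381 * (m : ℝ) ^ 3 + 185 * (m : ℝ) ^ 2 - 60 * (m : ℝ) + 2) * α
    - ((m : ℝ) - 2) ^ 3 * ((m : ℝ) - 1) ^ 2 * (m : ℝ)

/-- The rescaled quartic `(m+α) P(x/(m+α))`, in closed form. -/
noncomputable def qf (m α x : ℝ) : ℝ :=
  -(x * (x - 1) ^ 2 * (m - 1 + α - x)) + 4 * α * (m - 1) * ((m - 1 + α - x) * (x - 2) - 2)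

theorem qf_neg_low {m α x : ℝ} (hm : 2 ≤ m) (ha : 0 < α) (h2 : α * m ≤ 2) (hx : 0 ≤ x)
    (hy : 0 ≤ m - 1 + α - x) : qf m α x < 0 := by
  unfold qf
  set y := m - 1 + α - x
  have hk0 : 0 < α * (m - 1) := mul_pos ha (by linarith)
  have hk : α * (m - 1) < 2 := by nlinarith
  have h1 : 0 ≤ x * (x - 1) ^ 2 * y := by positivity
  rcases le_or_gt (y * (x - 2)) 2 with h | h
  · rcases h.eq_or_lt with h' | h'
    · have hxpos : 0 < y * (x - 2) := by linarith
      have hx2 : 0 < x - 2 := pos_of_mul_pos_right hxpos hy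
      have hyp : 0 < y := pos_of_mul_pos_left hxpos hx2.le
      have : 0 < x * (x - 1) ^ 2 * y := by
        have : 0 < x := by linarith
        have : 0 < x - 1 := by linarith
        positivity
      rw [h']; linarith
    · nlinarith [mul_pos hk0 (sub_pos.2 h')]
  · have hc : 8 * (x - 2) ≤ x * (x - 1) ^ 2 := by
      nlinarith [mul_nonneg hx (sq_nonneg (x - 9 / 4)), sq_nonneg (x - 9 / 4)]
    have h3 := mul_le_mul_of_nonneg_right hc hy
    nlinarith [mul_pos (sub_pos.2 hk) (sub_pos.2 h)]

theorem qf_neg_two {m α x : ℝ} (hm : 2 ≤ m) (ha : 0 < α) (hx : 0 ≤ x) (hx2 : x ≤ 2)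
    (hy : 0 ≤ m - 1 + α - x) : qf m α x < 0 := by
  unfold qf
  set y := m - 1 + α - x
  have hk0 : 0 < α * (m - 1) := mul_pos ha (by linarith)
  have h1 : 0 ≤ x * (x - 1) ^ 2 * y := by positivity
  have h2 : 0 ≤ y * (2 - x) := mul_nonneg hy (by linarith)
  nlinarith [mul_nonneg hk0.le h2]

theorem qf_pos_up (n : ℕ) (hn : 2 ≤ n) : 0 < qf n (12 / n) (17 / 5) := by
  unfold qf
  rcases hn.eq_or_lt with h | h
  · subst h; norm_num
  · have hm : (3 : ℝ) ≤ n := by exact_mod_cast h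
    generalize hM : (n : ℝ) = m at hm
    have hm0 : 0 < m := by linarith
    have hy : 13 / 5 ≤ m - 1 + 12 / m - 17 / 5 := by
      have h34 : 0 ≤ (m - 3) * (m - 4) := by
        rcases (Nat.succ_le_of_lt h).eq_or_lt with h | h
        · have : m = 3 := by rw [← hM, ← h]; norm_num
          rw [this]; norm_num
        · have : (4 : ℝ) ≤ m := by rw [← hM]; exact_mod_cast h
          exact mul_nonneg (by linarith) (by linarith)
      have : 7 ≤ m + 12 / m := by
        rw [← sub_nonneg]
        have : m + 12 / m - 7 = ((m - 3) * (m - 4)) / m := by field_simp; ring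
        rw [this]; positivity
      linarith
    have hr : 4 * (12 / m) * (m - 1) = 48 * (1 - 1 / m) := by field_simp; ring
    have hr2 : 1 / m ≤ 1 / 3 := one_div_le_one_div_of_le (by norm_num) hm
    rw [hr]
    nlinarith [mul_nonneg (sub_nonneg.2 hr2) (sub_nonneg.2 hy)]

theorem qf_up {m α β x : ℝ} (hm : 2 ≤ m) (ha : 0 < α) (hab : α ≤ β) (hx : 2 < x)
    (hy : 0 < m - 1 + α - x) (h0 : qf m α x = 0) : 0 ≤ qf m β x := by
  unfold qf at *
  obtain ⟨y, hyd⟩ : ∃ y, y = m - 1 + α - x := ⟨_, rfl⟩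
  obtain ⟨d, hd⟩ : ∃ d, β = α + d := ⟨β - α, by ring⟩
  have hd0 : 0 ≤ d := by linarith
  have e : m - 1 + β - x = y + d := by rw [hyd, hd]; ring
  rw [e]
  rw [← hyd] at h0 hy
  subst hd
  have hk0 : 0 < α * (m - 1) := mul_pos ha (by linarith)
  have hs : 2 < y * (x - 2) := by
    have h1 : 0 < x * (x - 1) ^ 2 * y := by
      have : 0 < x := by linarith
      have : 0 < x - 1 := by linarith
      positivity
    by_contra hc
    push Not at hc
    nlinarith [mul_nonneg hk0.le (sub_nonneg.2 hc)]
  refine nonneg_of_mul_nonneg_right (a := y) ?_ hy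
  have key : y * (-(x * (x - 1) ^ 2 * (y + d)) + 4 * (α + d) * (m - 1) * ((y + d) * (x - 2) - 2))
      = 4 * (m - 1) * ((y + d) * d * (y * (x - 2) - 2) + 2 * d * (d + α)) := by
    linear_combination (y + d) * h0
  rw [key]
  have : 0 ≤ m - 1 := by linarith
  have : 0 ≤ y * (x - 2) - 2 := by linarith
  positivity

/-- Discriminant of a monic quartic vanishes at a double root. -/
theorem disc_zero {b c d e x : ℝ} (h : x ^ 4 + b * x ^ 3 + c * x ^ 2 + d * x + e = 0)
    (h' : 4 * x ^ 3 + 3 * b * x ^ 2 + 2 * c * x + d = 0) :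
    256*e^3-192*b*d*e^2-128*c^2*e^2+144*c*d^2*e-27*d^4+144*b^2*c*e^2-6*b^2*d^2*e-80*b*c^2*d*e
    +18*b*c*d^3+16*c^4*e-4*c^3*d^2-27*b^4*e^2+18*b^3*c*d*e-4*b^3*d^3-4*b^2*c^3*e+b^2*c^2*d^2
    = 0 := by
  have hd : d = -(4 * x ^ 3 + 3 * b * x ^ 2 + 2 * c * x) := by linarith
  subst hd
  have he : e = 3 * x ^ 4 + 2 * b * x ^ 3 + c * x ^ 2 := by linarith
  subst he
  ring

theorem qf_eq (m α x : ℝ) : qf m α x = x ^ 4 + (-(m + α + 1)) * x ^ 3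
    + (2 * m + 6 * α - 4 * m * α - 1) * x ^ 2
    + (4 * m ^ 2 * α + 4 * α ^ 2 * m - 4 * α ^ 2 - 5 * α - m + 1) * x
    + (-(8 * (m - 1) * α * (m + α))) := by
  unfold qf; ring

theorem pm_zero {n : ℕ} {α x : ℝ} (hn : 2 ≤ n) (ha : 0 < α) (h : qf n α x = 0)
    (h' : HasDerivAt (fun t => qf n α t) 0 x) : pm n α = 0 := by
  have hm : (2 : ℝ) ≤ n := by exact_mod_cast hn
  generalize hM : (n : ℝ) = m at *
  have hder : 4 * x ^ 3 + 3 * (-(m + α + 1)) * x ^ 2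
      + 2 * (2 * m + 6 * α - 4 * m * α - 1) * x
      + (4 * m ^ 2 * α + 4 * α ^ 2 * m - 4 * α ^ 2 - 5 * α - m + 1) = 0 := by
    simp only [qf_eq] at h'
    have h2 := (((((hasDerivAt_pow 4 x).add ((hasDerivAt_pow 3 x).const_mul (-(m + α + 1)))).add
      ((hasDerivAt_pow 2 x).const_mul (2 * m + 6 * α - 4 * m * α - 1))).add
      ((hasDerivAt_id x).const_mul (4 * m ^ 2 * α + 4 * α ^ 2 * m - 4 * α ^ 2 - 5 * α - m + 1))).add
      (hasDerivAt_const x (-(8 * (m - 1) * α * (m + α)))))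
    have h3 := h2.unique h'
    norm_num at h3
    linear_combination h3
  rw [qf_eq] at h
  have hD := disc_zero h hder
  have h0 : 16 * (m - 1) * α * pm n α = 0 := by
    rw [← hD]
    unfold pm
    rw [hM]
    ring
  have : 16 * (m - 1) * α ≠ 0 := by
    have : 0 < m - 1 := by linarith
    positivity
  exact (mul_eq_zero.1 h0).resolve_left this

theorem qf_cont (m : ℝ) : Continuous (fun p : ℝ × ℝ => qf m p.1 p.2) := by
  unfold qf; fun_prop

/-- For every integer `m ≥ 2` there exists an algebraic number `α_m ∈ (2/m, 12/m)`, a root of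
`𝐩_m`, such that for every `α ≥ α_m` there is `γ ∈ (0, 1 − 1/(m+α))` with `P_{m,α}(γ) ≥ 0`. -/
theorem main_lemma (m : ℕ) (hm : 2 ≤ m) :
    ∃ αm : ℝ, 2 / (m : ℝ) < αm ∧ αm < 12 / (m : ℝ) ∧ pm m αm = 0 ∧
      ∀ α : ℝ, αm ≤ α →
        ∃ γ : ℝ, 0 < γ ∧ γ < 1 - 1 / ((m : ℝ) + α) ∧ Pquartic m α γ ≥ 0 := by
  have hm' : (2 : ℝ) ≤ m := by exact_mod_cast hm
  have hm0 : (0 : ℝ) < m := by linarith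
  have hl0 : 0 < 2 / (m : ℝ) := by positivity
  let K : Set (ℝ × ℝ) := (Set.Icc (2 / (m : ℝ)) (12 / m) ×ˢ Set.Icc 2 ((m : ℝ) - 1 + 12 / m)) ∩
    ({p | 0 ≤ qf m p.1 p.2} ∩ {p | 0 ≤ (m : ℝ) - 1 + p.1 - p.2})
  have hK : IsCompact K := by
    refine (isCompact_Icc.prod isCompact_Icc).inter_right (IsClosed.inter ?_ ?_)
    · exact isClosed_le continuous_const (qf_cont m)
    · exact isClosed_le continuous_const (by fun_prop)
  have hup := qf_pos_up m hm
  have h12 : 2 / (m : ℝ) < 12 / m := by gcongr; norm_num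
  have hy12 : (17 / 5 : ℝ) ≤ (m : ℝ) - 1 + 12 / m := by
    have : 6 ≤ (m : ℝ) + 12 / m := by
      rw [← sub_nonneg]
      have : (m : ℝ) + 12 / m - 6 = (((m : ℝ) - 3) ^ 2 + 3) / m := by field_simp; ring
      rw [this]; positivity
    linarith
  have hKup : ((12 / m, 17 / 5) : ℝ × ℝ) ∈ K :=
    ⟨⟨⟨h12.le, le_rfl⟩, ⟨by norm_num, hy12⟩⟩, hup.le, sub_nonneg.2 hy12⟩
  obtain ⟨⟨a, x⟩, hax, hmin⟩ := hK.exists_isMinOn ⟨_, hKup⟩ continuous_fst.continuousOn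
  have hmin' : ∀ b z : ℝ, (b, z) ∈ K → a ≤ b := fun b z hb => hmin hb
  obtain ⟨⟨⟨ha1, ha2⟩, hx1, hx2⟩, hq, hy⟩ := hax
  simp only [Set.mem_ofPred_eq] at ha1 ha2 hx1 hx2 hq hy
  have ha0 : 0 < a := lt_of_lt_of_le hl0 ha1
  have hal : 2 / (m : ℝ) < a := by
    refine lt_of_le_of_ne ha1 fun h => ?_
    have := qf_neg_low (m := m) (α := a) (x := x) hm' ha0
      (by rw [← h]; field_simp; exact le_rfl) (by linarith) hy
    linarith
  -- for every admissible z the value at the minimal α is nonpositive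
  have hle : ∀ z : ℝ, 2 ≤ z → z ≤ (m : ℝ) - 1 + a → qf m a z ≤ 0 := by
    intro z hz1 hz2
    by_contra hc
    push Not at hc
    have hzs : z < (m : ℝ) - 1 + a := by
      refine lt_of_le_of_ne hz2 fun h => ?_
      have hz : (m : ℝ) - 1 + a - z = 0 := by linarith
      unfold qf at hc
      rw [hz] at hc
      have : 0 < a * ((m : ℝ) - 1) := mul_pos ha0 (by linarith)
      linarith
    have hcont : Continuous (fun b : ℝ => qf m b z) := by unfold qf; fun_prop
    have e1 : ∀ᶠ b in nhds a, 0 < qf m b z := hcont.continuousAt.eventually (lt_mem_nhds hc)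
    have e2 : ∀ᶠ b in nhds a, 2 / (m : ℝ) < b := lt_mem_nhds hal
    have e3 : ∀ᶠ b in nhds a, z - (m - 1) < b := lt_mem_nhds (by linarith)
    obtain ⟨b, ⟨hb1, hb2, hb3⟩, hba⟩ :=
      (((e1.and (e2.and e3)).filter_mono nhdsWithin_le_nhds).and
        (self_mem_nhdsWithin : Set.Iio a ∈ nhdsWithin a (Set.Iio a))).exists
    have hba' : b < a := hba
    have := hmin' b z ⟨⟨⟨hb2.le, by linarith⟩, ⟨hz1, by linarith⟩⟩, hb1.le,
      (by linarith : 0 ≤ (m : ℝ) - 1 + b - z)⟩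
    linarith
  have hau : a < 12 / (m : ℝ) := by
    refine lt_of_le_of_ne ha2 fun h => ?_
    have := hle (17 / 5) (by norm_num) (by rw [h]; exact hy12)
    rw [h] at this
    linarith
  have hq0 : qf m a x = 0 := le_antisymm (hle x hx1 (by linarith)) hq
  have hx2' : 2 < x := by
    by_contra hc
    have := qf_neg_two (m := m) (α := a) (x := x) hm' ha0 (by linarith) (not_lt.1 hc) hy
    linarith
  have hy' : 0 < (m : ℝ) - 1 + a - x := by
    refine lt_of_le_of_ne hy fun h => ?_
    unfold qf at hq0
    rw [← h] at hq0
    have : 0 < a * ((m : ℝ) - 1) := mul_pos ha0 (by linarith)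
    linarith
  refine ⟨a, hal, hau, ?_, ?_⟩
  · have hd : DifferentiableAt ℝ (fun t => qf m a t) x := by unfold qf; fun_prop
    have hmax : IsLocalMax (fun t => qf m a t) x := by
      have : ∀ᶠ z in nhds x, z ∈ Set.Ioo 2 ((m : ℝ) - 1 + a) :=
        Ioo_mem_nhds hx2' (by linarith)
      filter_upwards [this] with z hz
      rw [hq0]
      exact hle z hz.1.le hz.2.le
    have h2 := hd.hasDerivAt
    rw [hmax.deriv_eq_zero] at h2
    exact pm_zero hm ha0 hq0 h2
  · intro α hα
    have hs : 0 < (m : ℝ) + α := by linarith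
    refine ⟨x / (m + α), by positivity, ?_, ?_⟩
    · have : 1 - 1 / ((m : ℝ) + α) = (m + α - 1) / (m + α) := by field_simp
      rw [this]
      exact div_lt_div_of_pos_right (by linarith) hs
    · have hqa := qf_up hm' ha0 hα hx2' hy' hq0
      have : Pquartic m α (x / (m + α)) = qf m α x / (m + α) := by
        rw [qf_eq]
        unfold Pquartic
        field_simp
      rw [this]
      positivity
end

section
/- Let m ≥ 2 be an integer and let α > 2/m be a real number. If 𝐩_m(α) ≥ 0, then there exists γ with 0 < γ < 1 − 1/(m+α) and P_{m,α}(γ) ≥ 0. -/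
/-- A monic real quartic with two distinct simple real roots and nonnegative discriminant
has a further real root. -/
lemma quartic_third_root (B C D E r1 r2 : ℝ) (hne : r1 ≠ r2)
    (h1 : r1 ^ 4 + B * r1 ^ 3 + C * r1 ^ 2 + D * r1 + E = 0)
    (h2 : r2 ^ 4 + B * r2 ^ 3 + C * r2 ^ 2 + D * r2 + E = 0)
    (d1 : 4 * r1 ^ 3 + 3 * B * r1 ^ 2 + 2 * C * r1 + D ≠ 0)
    (d2 : 4 * r2 ^ 3 + 3 * B * r2 ^ 2 + 2 * C * r2 + D ≠ 0)
    (hd : 0 ≤ 256 * E ^ 3 - 192 * B * D * E ^ 2 - 128 * C ^ 2 * E ^ 2 + 144 * C * D ^ 2 * E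
      - 27 * D ^ 4 + 144 * B ^ 2 * C * E ^ 2 - 6 * B ^ 2 * D ^ 2 * E - 80 * B * C ^ 2 * D * E
      + 18 * B * C * D ^ 3 + 16 * C ^ 4 * E - 4 * C ^ 3 * D ^ 2 - 27 * B ^ 4 * E ^ 2
      + 18 * B ^ 3 * C * D * E - 4 * B ^ 3 * D ^ 3 - 4 * B ^ 2 * C ^ 3 * E
      + B ^ 2 * C ^ 2 * D ^ 2) :
    ∃ t : ℝ, t ≠ r1 ∧ t ≠ r2 ∧ t ^ 4 + B * t ^ 3 + C * t ^ 2 + D * t + E = 0 := by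
  obtain ⟨b, hb⟩ : ∃ b, b = B + r1 + r2 := ⟨_, rfl⟩
  obtain ⟨c, hc⟩ : ∃ c, c = C - r1 * r2 + (r1 + r2) * b := ⟨_, rfl⟩
  have hB : B = b - r1 - r2 := by linarith
  have hC : C = c + r1 * r2 - (r1 + r2) * b := by linarith
  have hD : D = r1 * r2 * b - (r1 + r2) * c := by
    have h3 : (r1 - r2) * (D - (r1 * r2 * b - (r1 + r2) * c)) = 0 := by
      rw [hB, hC] at h1 h2
      linear_combination h1 - h2
    rcases mul_eq_zero.1 h3 with h | h
    · exact absurd (sub_eq_zero.1 h) hne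
    · linarith
  have hE : E = r1 * r2 * c := by
    rw [hB, hC, hD] at h1
    linear_combination h1
  clear hb hc
  subst hB hC hD hE
  have e1 : r1 ^ 2 + b * r1 + c ≠ 0 := by
    intro h
    apply d1
    linear_combination (r1 - r2) * h
  have e2 : r2 ^ 2 + b * r2 + c ≠ 0 := by
    intro h
    apply d2
    linear_combination (r2 - r1) * h
  have hpos : 0 < ((r1 - r2) * ((r1 ^ 2 + b * r1 + c) * (r2 ^ 2 + b * r2 + c))) ^ 2 := by
    have := mul_ne_zero (sub_ne_zero.2 hne) (mul_ne_zero e1 e2)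
    positivity
  have hdd : 0 ≤ ((r1 - r2) * ((r1 ^ 2 + b * r1 + c) * (r2 ^ 2 + b * r2 + c))) ^ 2
      * (b ^ 2 - 4 * c) := by
    refine hd.trans_eq ?_
    ring
  have hbc : 0 ≤ b ^ 2 - 4 * c := nonneg_of_mul_nonneg_right hdd hpos
  have hs := Real.sq_sqrt hbc
  have ht : ((-b + √(b ^ 2 - 4 * c)) / 2) ^ 2 + b * ((-b + √(b ^ 2 - 4 * c)) / 2) + c = 0 := by
    linear_combination hs / 4
  generalize (-b + √(b ^ 2 - 4 * c)) / 2 = t at ht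
  refine ⟨t, ?_, ?_, ?_⟩
  · rintro rfl; exact e1 ht
  · rintro rfl; exact e2 ht
  · linear_combination (t - r1) * (t - r2) * ht

/-- The rescaled quartic `Q(x)`, with `s * P(x / s) = Q(x)`, `s = m + α`, `k = (m - 1) α`. -/
noncomputable def Qaux (s k x : ℝ) : ℝ :=
  x * (x - (s - 1)) * ((x - 1) ^ 2 - 4 * k) - 8 * k * (s - x)

lemma Qaux_neg_W {s k x : ℝ} (hs : 2 < s) (hk : 0 < k) (hx : x < 0) (h : Qaux s k x = 0) :
    0 < (x - 1) ^ 2 - 4 * k := by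
  unfold Qaux at h
  by_contra! hw
  have h1 : 0 < x * (x - (s - 1)) := mul_pos_of_neg_of_neg hx (by linarith)
  have h2 : 0 < k * (s - x) := mul_pos hk (by linarith)
  nlinarith [mul_nonneg h1.le (neg_nonneg.2 hw)]

lemma Qaux_pos_W {s k x : ℝ} (hs : 2 < s) (hk : 0 < k) (hx : s - 1 < x) (hx2 : x ≤ s)
    (h : Qaux s k x = 0) : 0 ≤ (x - 1) ^ 2 - 4 * k := by
  unfold Qaux at h
  by_contra! hw
  have h1 : 0 < x * (x - (s - 1)) := mul_pos (by linarith) (by linarith)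
  have h2 : 0 ≤ k * (s - x) := mul_nonneg hk.le (by linarith)
  nlinarith [mul_pos h1 (neg_pos.2 hw)]

lemma Qaux_neg_unique {s k x y : ℝ} (hs : 2 < s) (hk : 0 < k) (hxy : x < y) (hy : y < 0)
    (h : Qaux s k x = 0) (h' : Qaux s k y = 0) : False := by
  have hw := Qaux_neg_W hs hk hy h'
  unfold Qaux at h h'
  have hww : (y - 1) ^ 2 - 4 * k < (x - 1) ^ 2 - 4 * k := by nlinarith
  have h1 : 0 < y * (y - (s - 1)) := mul_pos_of_neg_of_neg hy (by linarith)
  have h2 : y * (y - (s - 1)) * (s - x) < x * (x - (s - 1)) * (s - y) := by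
    have : x * (x - (s - 1)) * (s - y) - y * (y - (s - 1)) * (s - x)
        = (y - x) * (-(x + y) * s + x * y + s * (s - 1)) := by ring
    have h3 : 0 < (y - x) * (-(x + y) * s + x * y + s * (s - 1)) := by
      apply mul_pos (by linarith)
      have : 0 < -(x + y) * s := mul_pos (by linarith) (by linarith)
      have : 0 < x * y := mul_pos_of_neg_of_neg (by linarith) hy
      have : 0 < s * (s - 1) := mul_pos (by linarith) (by linarith)
      linarith
    linarith
  have h4 : 0 < y * (y - (s - 1)) * (s - x) := mul_pos h1 (by linarith)
  have h5 := mul_lt_mul'' h2 hww h4.le hw.le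
  apply h5.ne
  linear_combination (s - x) * h' - (s - y) * h

lemma Qaux_pos_unique {s k x y : ℝ} (hs : 2 < s) (hk : 0 < k) (hx : s - 1 < x) (hxy : x < y)
    (hy : y ≤ s) (h : Qaux s k x = 0) (h' : Qaux s k y = 0) : False := by
  have hw := Qaux_pos_W hs hk hx (by linarith) h
  unfold Qaux at h h'
  have hww : (x - 1) ^ 2 - 4 * k ≤ (y - 1) ^ 2 - 4 * k := by nlinarith
  have h1 : x * (x - (s - 1)) ≤ y * (y - (s - 1)) :=
    mul_le_mul hxy.le (by linarith) (by linarith) (by linarith)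
  have h0 : 0 ≤ y * (y - (s - 1)) := mul_nonneg (by linarith) (by linarith)
  have h2 := mul_le_mul h1 hww hw h0
  have : 0 < k * (y - x) := mul_pos hk (by linarith)
  linarith

/-- The derivative of `Q` is negative at a negative root. -/
lemma Qaux_deriv_neg {s k x : ℝ} (hs : 2 < s) (hk : 0 < k) (hx : x < 0) (h : Qaux s k x = 0) :
    (2 * x - (s - 1)) * ((x - 1) ^ 2 - 4 * k) + 2 * x * (x - (s - 1)) * (x - 1) + 8 * k ≠ 0 := by
  have hw := Qaux_neg_W hs hk hx h
  unfold Qaux at h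
  intro h0
  have h1 : 0 < x * (x - (s - 1)) := mul_pos_of_neg_of_neg hx (by linarith)
  have h2 : 0 < (x * (x - (s - 1))) * (1 - x) * (s - x) :=
    mul_pos (mul_pos h1 (by linarith)) (by linarith)
  have h3 : 0 < ((x - 1) ^ 2 - 4 * k) * (x ^ 2 - 2 * s * x + (s - 1) * s) := by
    apply mul_pos hw
    have : 0 < s * (s - 1) := mul_pos (by linarith) (by linarith)
    have : 0 < s * (-x) := mul_pos (by linarith) (by linarith)
    nlinarith [sq_nonneg x]
  have h4 : ((x - 1) ^ 2 - 4 * k) * (x ^ 2 - 2 * s * x + (s - 1) * s)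
      + 2 * ((x * (x - (s - 1))) * (1 - x) * (s - x)) = 0 := by
    linear_combination -h - (s - x) * h0
  linarith

/-- The derivative of `Q` is positive at the root beyond `s - 1`. -/
lemma Qaux_deriv_pos {s k x : ℝ} (hs : 2 < s) (hk : 0 < k) (hx : s - 1 < x) (hx2 : x ≤ s)
    (h : Qaux s k x = 0) :
    (2 * x - (s - 1)) * ((x - 1) ^ 2 - 4 * k) + 2 * x * (x - (s - 1)) * (x - 1) + 8 * k ≠ 0 := by
  have hw := Qaux_pos_W hs hk hx hx2 h
  have h1 : 0 ≤ (2 * x - (s - 1)) * ((x - 1) ^ 2 - 4 * k) := mul_nonneg (by linarith) hw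
  have h2 : 0 < x * (x - (s - 1)) * (x - 1) :=
    mul_pos (mul_pos (by linarith) (by linarith)) (by linarith)
  intro h0
  linarith

/-- For `m ≥ 2` and `α > 2/m`, if `𝐩_m(α) ≥ 0` then there exists `γ ∈ (0, 1 − 1/(m+α))`
with `P_{m,α}(γ) ≥ 0`. -/
theorem gamma_exists_of_pm_nonneg (m : ℕ) (hm : 2 ≤ m) (α : ℝ) (hα : 2 / (m : ℝ) < α)
    (hpm : pm m α ≥ 0) :
    ∃ γ : ℝ, 0 < γ ∧ γ < 1 - 1 / ((m : ℝ) + α) ∧ Pquartic m α γ ≥ 0 := by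
  have hm2 : (2 : ℝ) ≤ m := by exact_mod_cast hm
  have hα0 : 0 < α := lt_trans (by positivity) hα
  unfold pm at hpm
  unfold Pquartic
  generalize (m : ℝ) = M at *
  obtain ⟨s, hs⟩ : ∃ s, s = M + α := ⟨_, rfl⟩
  obtain ⟨k, hk⟩ : ∃ k, k = (M - 1) * α := ⟨_, rfl⟩
  have hs2 : 2 < s := by linarith
  have hk0 : 0 < k := by rw [hk]; exact mul_pos (by linarith) hα0
  have hsk : 4 * k ≤ (s - 1) ^ 2 := by
    rw [hs, hk]; nlinarith [sq_nonneg (M - α - 1)]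
  have hcont : Continuous (Qaux s k) := by unfold Qaux; fun_prop
  -- the negative root
  have hQ0 : Qaux s k 0 < 0 := by
    unfold Qaux; nlinarith [mul_pos hk0 (by linarith : 0 < s)]
  have hQneg : 0 < Qaux s k (-s) := by
    have e : Qaux s k (-s) = s * ((2 * s - 1) * ((s - 1) ^ 2 - 4 * k)
        + 4 * ((s - 1) ^ 2 - 4 * k) + 4 * s * s + 4 * (s - 1)) := by
      unfold Qaux; ring
    rw [e]
    apply mul_pos (by linarith)
    nlinarith [mul_nonneg (by linarith : 0 ≤ 2 * s - 1) (sub_nonneg.2 hsk)]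
  have hQL : Qaux s k (s - 1) < 0 := by unfold Qaux; nlinarith
  have hQs : 0 ≤ Qaux s k s := by
    have e : Qaux s k s = s * ((s - 1) ^ 2 - 4 * k) := by unfold Qaux; ring
    rw [e]
    exact mul_nonneg (by linarith) (by linarith)
  obtain ⟨r1, ⟨h1a, h1b⟩, h1⟩ := intermediate_value_Icc' (by linarith : -s ≤ 0)
    hcont.continuousOn ⟨hQ0.le, hQneg.le⟩
  obtain ⟨r2, ⟨h2a, h2b⟩, h2⟩ := intermediate_value_Icc (by linarith : s - 1 ≤ s)
    hcont.continuousOn ⟨hQL.le, hQs⟩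
  have hr1 : r1 < 0 := lt_of_le_of_ne h1b (by rintro rfl; linarith)
  have hr2 : s - 1 < r2 := lt_of_le_of_ne h2a (by rintro rfl; linarith)
  have D1 := Qaux_deriv_neg hs2 hk0 hr1 h1
  have D2 := Qaux_deriv_pos hs2 hk0 hr2 h2b h2
  have hQ : ∀ x, x ^ 4 + (-(s + 1)) * x ^ 3 + (2 * s - 1 - 4 * k) * x ^ 2
      + (4 * k * (s + 1) - (s - 1)) * x + (-8 * k * s) = Qaux s k x := by
    intro x; unfold Qaux; ring
  obtain ⟨t, ht1, ht2, ht⟩ := quartic_third_root (-(s + 1)) (2 * s - 1 - 4 * k)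
    (4 * k * (s + 1) - (s - 1)) (-8 * k * s) r1 r2 (by linarith)
    (by rw [hQ, h1]) (by rw [hQ, h2])
    (fun h => D1 (by linear_combination h)) (fun h => D2 (by linear_combination h))
    (by
      refine (mul_nonneg (mul_nonneg (by norm_num : (0 : ℝ) ≤ 16) hk0.le) hpm).trans_eq ?_
      rw [hs, hk]
      ring)
  rw [hQ] at ht
  have ht0 : 0 < t := by
    rcases lt_trichotomy t 0 with h | h | h
    · rcases lt_or_gt_of_ne ht1 with h' | h'
      · exact (Qaux_neg_unique hs2 hk0 h' hr1 ht h1).elim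
      · exact (Qaux_neg_unique hs2 hk0 h' h h1 ht).elim
    · rw [h] at ht; linarith
    · exact h
  have htL : t < s - 1 := by
    rcases lt_trichotomy t (s - 1) with h | h | h
    · exact h
    · rw [h] at ht; linarith
    · have hts : t ≤ s := by
        by_contra! hc
        unfold Qaux at ht
        have hw : 0 < (t - 1) ^ 2 - 4 * k := by nlinarith
        have a1 : 0 < t * (t - (s - 1)) * ((t - 1) ^ 2 - 4 * k) :=
          mul_pos (mul_pos ht0 (by linarith)) hw
        have a2 : 0 < k * (t - s) := mul_pos hk0 (by linarith)
        linarith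
      rcases lt_or_gt_of_ne ht2 with h' | h'
      · exact (Qaux_pos_unique hs2 hk0 h h' h2b ht h2).elim
      · exact (Qaux_pos_unique hs2 hk0 hr2 h' hts h2 ht).elim
  have hsp : 0 < s := by linarith
  refine ⟨t / s, by positivity, ?_, ?_⟩
  · rw [← hs, one_sub_div hsp.ne']
    exact div_lt_div_of_pos_right htL hsp
  · obtain ⟨g, hg⟩ : ∃ g, g = t / s := ⟨_, rfl⟩
    have htg : t = s * g := by rw [hg]; field_simp
    rw [← hg]
    apply ge_of_eq
    rw [htg] at ht
    unfold Qaux at ht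
    apply (mul_eq_zero.1 _).resolve_left hsp.ne'
    rw [← ht, hk, hs]
    ring
end

section
/- For every integer m ≥ 2, the polynomial 𝐩_m has exactly one positive real root, i.e., there exists a unique α > 0 with 𝐩_m(α) = 0. -/
noncomputable def cf0 (m : ℝ) : ℝ := -((m-2)^3*(m-1)^2*m)
noncomputable def cf1 (m : ℝ) : ℝ := -(2*(m-1)*(22*m^6-148*m^5+363*m^4-381*m^3+185*m^2-60*m+2))
noncomputable def cf2 (m : ℝ) : ℝ := 16*m^8-192*m^7+984*m^6-2864*m^5+1001*m^4+4184*m^3-3870*m^2+794*m-52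
noncomputable def cf3 (m : ℝ) : ℝ := -(2*(16*m^7-208*m^6+250*m^5+2302*m^4-3214*m^3-588*m^2+1566*m-123))
noncomputable def cf4 (m : ℝ) : ℝ := -((m-1)*(16*m^5+48*m^4-1712*m^3+6672*m^2-4321*m-641))
noncomputable def cf5 (m : ℝ) : ℝ := 2*(32*m^5-224*m^4+1238*m^3-2738*m^2+2545*m-852)
noncomputable def cf6 (m : ℝ) : ℝ := -(16*m^4-256*m^3+584*m^2-496*m+153)
noncomputable def cf7 (m : ℝ) : ℝ := -(4*(m-1)*(8*m^2+3))
noncomputable def cf8 (m : ℝ) : ℝ := 16*(m-1)^2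

/-- The binary form of degree 8 with coefficients `c0, …, c8`. -/
def oct (c0 c1 c2 c3 c4 c5 c6 c7 c8 n d : ℝ) : ℝ :=
  c0 * n ^ 0 * d ^ 8 + c1 * n ^ 1 * d ^ 7 + c2 * n ^ 2 * d ^ 6 + c3 * n ^ 3 * d ^ 5 + c4 * n ^ 4 * d ^ 4 + c5 * n ^ 5 * d ^ 3 + c6 * n ^ 6 * d ^ 2 + c7 * n ^ 7 * d ^ 1 + c8 * n ^ 8 * d ^ 0

/-- The form attached to the derivative of the quotient by the k-th power. -/
def octD (k : ℝ) (c0 c1 c2 c3 c4 c5 c6 c7 c8 n d : ℝ) : ℝ :=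
  (0 - k) * c0 * n ^ 0 * d ^ 8 + (1 - k) * c1 * n ^ 1 * d ^ 7 + (2 - k) * c2 * n ^ 2 * d ^ 6 + (3 - k) * c3 * n ^ 3 * d ^ 5 + (4 - k) * c4 * n ^ 4 * d ^ 4 + (5 - k) * c5 * n ^ 5 * d ^ 3 + (6 - k) * c6 * n ^ 6 * d ^ 2 + (7 - k) * c7 * n ^ 7 * d ^ 1 + (8 - k) * c8 * n ^ 8 * d ^ 0

theorem oct_scale (c0 c1 c2 c3 c4 c5 c6 c7 c8 x d : ℝ) : oct c0 c1 c2 c3 c4 c5 c6 c7 c8 (x * d) d = oct c0 c1 c2 c3 c4 c5 c6 c7 c8 x 1 * d ^ 8 := by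
  unfold oct; ring

theorem octD_scale (k c0 c1 c2 c3 c4 c5 c6 c7 c8 x d : ℝ) :
    octD k c0 c1 c2 c3 c4 c5 c6 c7 c8 (x * d) d = octD k c0 c1 c2 c3 c4 c5 c6 c7 c8 x 1 * d ^ 8 := by
  unfold octD; ring

theorem oct_deriv (c0 c1 c2 c3 c4 c5 c6 c7 c8 x : ℝ) :
    HasDerivAt (fun x => oct c0 c1 c2 c3 c4 c5 c6 c7 c8 x 1)
      (1 * c1 * x ^ 0 + 2 * c2 * x ^ 1 + 3 * c3 * x ^ 2 + 4 * c4 * x ^ 3 + 5 * c5 * x ^ 4 + 6 * c6 * x ^ 5 + 7 * c7 * x ^ 6 + 8 * c8 * x ^ 7) x := by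
  have h : ∀ (c : ℝ) (j : ℕ), HasDerivAt (fun x : ℝ => c * x ^ j) (c * (j * x ^ (j - 1))) x :=
    fun c j => (hasDerivAt_pow j x).const_mul c
  have := ((((((((h c0 0).add (h c1 1)).add (h c2 2)).add (h c3 3)).add (h c4 4)).add
    (h c5 5)).add (h c6 6)).add (h c7 7)).add (h c8 8)
  refine (this.congr_deriv ?_).congr_of_eventuallyEq (Filter.Eventually.of_forall ?_)
  · norm_num; ring
  · intro x; simp [oct]

theorem low_mono (k : ℕ) (c0 c1 c2 c3 c4 c5 c6 c7 c8 c : ℝ)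
    (hlow : ∀ y : ℝ, 0 < y → 0 < octD k c0 c1 c2 c3 c4 c5 c6 c7 c8 (c * y) (1 + y)) :
    StrictMonoOn (fun x => oct c0 c1 c2 c3 c4 c5 c6 c7 c8 x 1 / x ^ k) (Set.Ioo 0 c) := by
  apply strictMonoOn_of_deriv_pos (convex_Ioo 0 c)
  · intro x hx
    have hx0 : x ^ k ≠ 0 := (pow_pos hx.1 k).ne'
    exact (((oct_deriv c0 c1 c2 c3 c4 c5 c6 c7 c8 x).continuousAt).div ((continuous_pow k).continuousAt) hx0).continuousWithinAt
  · intro x hx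
    rw [interior_Ioo] at hx
    obtain ⟨h0, h1⟩ := hx
    have hx0 : x ^ k ≠ 0 := (pow_pos h0 k).ne'
    have hd := (oct_deriv c0 c1 c2 c3 c4 c5 c6 c7 c8 x).div (hasDerivAt_pow k x) hx0
    have hd' := hd.deriv
    have hpos : 0 < octD k c0 c1 c2 c3 c4 c5 c6 c7 c8 x 1 := by
      have hy : 0 < x / (c - x) := div_pos h0 (by linarith)
      have := hlow _ hy
      have hcx : c - x ≠ 0 := by linarith
      have e : c * (x / (c - x)) = x * (1 + x / (c - x)) := by field_simp; ring
      rw [e, octD_scale] at this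
      exact pos_of_mul_pos_left this (by positivity)
    have e2 : x * (((1 * c1 * x ^ 0 + 2 * c2 * x ^ 1 + 3 * c3 * x ^ 2 + 4 * c4 * x ^ 3 + 5 * c5 * x ^ 4 + 6 * c6 * x ^ 5 + 7 * c7 * x ^ 6 + 8 * c8 * x ^ 7) * x ^ k
        - oct c0 c1 c2 c3 c4 c5 c6 c7 c8 x 1 * (k * x ^ (k - 1)))) = octD k c0 c1 c2 c3 c4 c5 c6 c7 c8 x 1 * x ^ k := by
      rcases k with _ | k
      · simp [oct, octD]; ring
      · simp only [oct, octD, Nat.add_sub_cancel]; push_cast; ring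
    have e3 := pos_of_mul_pos_right (e2 ▸ mul_pos hpos (pow_pos h0 k)) h0.le
    erw [hd']
    exact div_pos e3 (by positivity)

theorem uniq (k : ℕ) (c0 c1 c2 c3 c4 c5 c6 c7 c8 c e : ℝ) (he : 0 ≤ e) (hec : e < c)
    (hneg : oct c0 c1 c2 c3 c4 c5 c6 c7 c8 e 1 < 0)
    (hhigh : ∀ x, c ≤ x → 0 < oct c0 c1 c2 c3 c4 c5 c6 c7 c8 x 1)
    (hlow : ∀ y : ℝ, 0 < y → 0 < octD k c0 c1 c2 c3 c4 c5 c6 c7 c8 (c * y) (1 + y)) :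
    ∃! x : ℝ, 0 < x ∧ oct c0 c1 c2 c3 c4 c5 c6 c7 c8 x 1 = 0 := by
  have hcont : ContinuousOn (fun x => oct c0 c1 c2 c3 c4 c5 c6 c7 c8 x 1) (Set.Icc e c) :=
    fun x _ => (oct_deriv c0 c1 c2 c3 c4 c5 c6 c7 c8 x).continuousAt.continuousWithinAt
  obtain ⟨r, hr, hr0⟩ := intermediate_value_Ioo hec.le hcont ⟨hneg, hhigh c le_rfl⟩
  have hm := low_mono k c0 c1 c2 c3 c4 c5 c6 c7 c8 c hlow
  refine ⟨r, ⟨by linarith [hr.1], hr0⟩, ?_⟩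
  rintro s ⟨hs, hs0⟩
  have hsc : s < c := by
    by_contra h
    have := hhigh s (not_lt.mp h)
    linarith
  apply hm.injOn ⟨hs, hsc⟩ ⟨by linarith [hr.1], hr.2⟩
  have hr0' : oct c0 c1 c2 c3 c4 c5 c6 c7 c8 r 1 = 0 := hr0
  simp only [hs0, hr0', zero_div]

theorem pm_eq (m : ℕ) (x : ℝ) : pm m x = oct (cf0 m) (cf1 m) (cf2 m) (cf3 m) (cf4 m) (cf5 m) (cf6 m) (cf7 m) (cf8 m) x 1 := by
  simp only [pm, oct, cf0, cf1, cf2, cf3, cf4, cf5, cf6, cf7, cf8]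
  ring


theorem case2 : ∃! x : ℝ, 0 < x ∧ oct (cf0 2) (cf1 2) (cf2 2) (cf3 2) (cf4 2) (cf5 2) (cf6 2) (cf7 2) (cf8 2) x 1 = 0 := by
  apply uniq 5 _ _ _ _ _ _ _ _ _ 6 1 (by norm_num) (by norm_num)
  · norm_num [oct, cf0, cf1, cf2, cf3, cf4, cf5, cf6, cf7, cf8]
  · intro x hx
    obtain ⟨y, hy, rfl⟩ : ∃ y : ℝ, 0 ≤ y ∧ x = 6 + y := ⟨x - 6, by linarith, by ring⟩
    norm_num only [oct, cf0, cf1, cf2, cf3, cf4, cf5, cf6, cf7, cf8]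
    ring_nf
    positivity
  · intro y hy
    norm_num only [octD, cf0, cf1, cf2, cf3, cf4, cf5, cf6, cf7, cf8]
    ring_nf
    positivity

theorem case3 : ∃! x : ℝ, 0 < x ∧ oct (cf0 3) (cf1 3) (cf2 3) (cf3 3) (cf4 3) (cf5 3) (cf6 3) (cf7 3) (cf8 3) x 1 = 0 := by
  apply uniq 4 _ _ _ _ _ _ _ _ _ 4 0 (by norm_num) (by norm_num)
  · norm_num [oct, cf0, cf1, cf2, cf3, cf4, cf5, cf6, cf7, cf8]
  · intro x hx
    obtain ⟨y, hy, rfl⟩ : ∃ y : ℝ, 0 ≤ y ∧ x = 4 + y := ⟨x - 4, by linarith, by ring⟩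
    norm_num only [oct, cf0, cf1, cf2, cf3, cf4, cf5, cf6, cf7, cf8]
    ring_nf
    positivity
  · intro y hy
    norm_num only [octD, cf0, cf1, cf2, cf3, cf4, cf5, cf6, cf7, cf8]
    ring_nf
    positivity

theorem case4 : ∃! x : ℝ, 0 < x ∧ oct (cf0 4) (cf1 4) (cf2 4) (cf3 4) (cf4 4) (cf5 4) (cf6 4) (cf7 4) (cf8 4) x 1 = 0 := by
  apply uniq 4 _ _ _ _ _ _ _ _ _ 3 0 (by norm_num) (by norm_num)
  · norm_num [oct, cf0, cf1, cf2, cf3, cf4, cf5, cf6, cf7, cf8]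
  · intro x hx
    obtain ⟨y, hy, rfl⟩ : ∃ y : ℝ, 0 ≤ y ∧ x = 3 + y := ⟨x - 3, by linarith, by ring⟩
    norm_num only [oct, cf0, cf1, cf2, cf3, cf4, cf5, cf6, cf7, cf8]
    ring_nf
    positivity
  · intro y hy
    norm_num only [octD, cf0, cf1, cf2, cf3, cf4, cf5, cf6, cf7, cf8]
    ring_nf
    positivity

theorem case5 : ∃! x : ℝ, 0 < x ∧ oct (cf0 5) (cf1 5) (cf2 5) (cf3 5) (cf4 5) (cf5 5) (cf6 5) (cf7 5) (cf8 5) x 1 = 0 := by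
  apply uniq 3 _ _ _ _ _ _ _ _ _ 3 0 (by norm_num) (by norm_num)
  · norm_num [oct, cf0, cf1, cf2, cf3, cf4, cf5, cf6, cf7, cf8]
  · intro x hx
    obtain ⟨y, hy, rfl⟩ : ∃ y : ℝ, 0 ≤ y ∧ x = 3 + y := ⟨x - 3, by linarith, by ring⟩
    norm_num only [oct, cf0, cf1, cf2, cf3, cf4, cf5, cf6, cf7, cf8]
    ring_nf
    positivity
  · intro y hy
    norm_num only [octD, cf0, cf1, cf2, cf3, cf4, cf5, cf6, cf7, cf8]
    ring_nf
    positivity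

theorem case6 : ∃! x : ℝ, 0 < x ∧ oct (cf0 6) (cf1 6) (cf2 6) (cf3 6) (cf4 6) (cf5 6) (cf6 6) (cf7 6) (cf8 6) x 1 = 0 := by
  apply uniq 3 _ _ _ _ _ _ _ _ _ 4 0 (by norm_num) (by norm_num)
  · norm_num [oct, cf0, cf1, cf2, cf3, cf4, cf5, cf6, cf7, cf8]
  · intro x hx
    obtain ⟨y, hy, rfl⟩ : ∃ y : ℝ, 0 ≤ y ∧ x = 4 + y := ⟨x - 4, by linarith, by ring⟩
    norm_num only [oct, cf0, cf1, cf2, cf3, cf4, cf5, cf6, cf7, cf8]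
    ring_nf
    positivity
  · intro y hy
    norm_num only [octD, cf0, cf1, cf2, cf3, cf4, cf5, cf6, cf7, cf8]
    ring_nf
    positivity

theorem low_big (M y : ℝ) (hM : 0 ≤ M) (hy : 0 < y) :
    0 < octD (1 : ℕ) (cf0 (7 + M)) (cf1 (7 + M)) (cf2 (7 + M)) (cf3 (7 + M)) (cf4 (7 + M)) (cf5 (7 + M)) (cf6 (7 + M)) (cf7 (7 + M)) (cf8 (7 + M)) (1 * y) (1 + y) := by
  simp only [octD, cf0, cf1, cf2, cf3, cf4, cf5, cf6, cf7, cf8]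
  ring_nf
  positivity

theorem high_big (M s : ℝ) (hM : 0 ≤ M) (hs : 0 ≤ s) :
    0 < oct (cf0 (7 + M)) (cf1 (7 + M)) (cf2 (7 + M)) (cf3 (7 + M)) (cf4 (7 + M)) (cf5 (7 + M)) (cf6 (7 + M)) (cf7 (7 + M)) (cf8 (7 + M)) (7 + M + s) 1 := by
  simp only [oct, cf0, cf1, cf2, cf3, cf4, cf5, cf6, cf7, cf8]
  ring_nf
  positivity

theorem mid_big (M y : ℝ) (hM : 0 ≤ M) (hy : 0 ≤ y) :
    0 < oct (cf0 (7 + M)) (cf1 (7 + M)) (cf2 (7 + M)) (cf3 (7 + M)) (cf4 (7 + M)) (cf5 (7 + M)) (cf6 (7 + M)) (cf7 (7 + M)) (cf8 (7 + M)) (1 + (7 + M) * y) (1 + y) := by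
  have h : 0 < oct (cf0 (7 + M)) (cf1 (7 + M)) (cf2 (7 + M)) (cf3 (7 + M)) (cf4 (7 + M)) (cf5 (7 + M)) (cf6 (7 + M)) (cf7 (7 + M)) (cf8 (7 + M)) (1 + (7 + M) * y) (1 + y)
      - 16 * M ^ 8 * y ^ 4 * (M - 8 * y) ^ 2 := by
    simp only [oct, cf0, cf1, cf2, cf3, cf4, cf5, cf6, cf7, cf8]
    ring_nf
    positivity
  have h2 : 0 ≤ 16 * M ^ 8 * y ^ 4 * (M - 8 * y) ^ 2 := by positivity
  linarith

theorem case_big (m : ℝ) (hm : 7 ≤ m) :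
    ∃! x : ℝ, 0 < x ∧ oct (cf0 m) (cf1 m) (cf2 m) (cf3 m) (cf4 m) (cf5 m) (cf6 m) (cf7 m) (cf8 m) x 1 = 0 := by
  obtain ⟨M, hM, rfl⟩ : ∃ M : ℝ, 0 ≤ M ∧ m = 7 + M := ⟨m - 7, by linarith, by ring⟩
  apply uniq 1 _ _ _ _ _ _ _ _ _ 1 0 le_rfl one_pos
  · simp only [oct, cf0, cf1, cf2, cf3, cf4, cf5, cf6, cf7, cf8]
    rw [← neg_pos]
    ring_nf
    positivity
  · intro x hx
    rcases lt_or_ge x (7 + M) with h | h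
    · have hy : 0 ≤ (x - 1) / (7 + M - x) := div_nonneg (by linarith) (by linarith)
      have := mid_big M _ hM hy
      have hcx : 7 + M - x ≠ 0 := by linarith
      have e : 1 + (7 + M) * ((x - 1) / (7 + M - x)) = x * (1 + (x - 1) / (7 + M - x)) := by
        field_simp; ring
      rw [e, oct_scale] at this
      exact pos_of_mul_pos_left this (by positivity)
    · have := high_big M (x - (7 + M)) hM (by linarith)
      rwa [show 7 + M + (x - (7 + M)) = x by ring] at this
  · intro y hy
    exact low_big M y hM hy

/-- For every integer `m ≥ 2`, the polynomial `𝐩_m` has exactly one positive real root. -/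
theorem pm_unique_positive_root (m : ℕ) (hm : 2 ≤ m) :
    ∃! α : ℝ, 0 < α ∧ pm m α = 0 := by
  simp only [pm_eq]
  rcases lt_or_ge m 7 with h | h
  · interval_cases m
    · exact_mod_cast case2
    · exact_mod_cast case3
    · exact_mod_cast case4
    · exact_mod_cast case5
    · exact_mod_cast case6
  · exact case_big m (by exact_mod_cast h)
end
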